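/- Let Â = A + εB be an n×n dual matrix possessing a dual group generalized inverse Ĝ, and let G be a group inverse of A. Then Ĝ = G − ε·G·B·G if and only if B·(Iₙ − A·G) = 0 and (Iₙ − A·G)·B = 0. -/

import Mathlib

/-!
The only property of `εB` that matters is that `εB · G · εB = 0`. So let `g` be a group inverse of
`a` in a ring and let `b g b = 0`; then `g - g b g` is the whole geometric series
`g - g b g + g b g b g - ⋯`. Its two products with `a + b` are `a g + (1 - a g) b g` and
`a g + g b (1 - a g)`. Multiplication by the idempotent `a g` on the left kills the first error term
and fixes the second, so if the products agree, both error terms vanish; then `a g` is a two-sided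
unit for `a + b`, hence for `b`. The converse follows from the uniqueness of group inverses.
-/

open Matrix

/-- The dual matrix `A + εB`, viewed as a matrix over the dual numbers `ℝ[ε]`. -/
def dm {n : ℕ} (A B : Matrix (Fin n) (Fin n) ℝ) :
    Matrix (Fin n) (Fin n) (DualNumber ℝ) :=
  fun i j => TrivSqZeroExt.inl (A i j) + TrivSqZeroExt.inr (B i j)

/-- A dual matrix has dual index one iff its column space equals that of its square,
equivalently (as shown in the paper) there is a dual matrix `X` with `M² * X = M`. -/
def DualIndexOne {n : ℕ} (M : Matrix (Fin n) (Fin n) (DualNumber ℝ)) : Prop :=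
  ∃ X : Matrix (Fin n) (Fin n) (DualNumber ℝ), M * M * X = M

/-- `G` is a group inverse of the real matrix `A`. -/
def IsGroupInv {n : ℕ} (A G : Matrix (Fin n) (Fin n) ℝ) : Prop :=
  A * G * A = A ∧ G * A * G = G ∧ A * G = G * A

/-- `X` is the Moore–Penrose inverse of the real matrix `A`. -/
def IsMoorePenrose {n : ℕ} (A X : Matrix (Fin n) (Fin n) ℝ) : Prop :=
  A * X * A = A ∧ X * A * X = X ∧ (A * X)ᵀ = A * X ∧ (X * A)ᵀ = X * A

/-- `C` is a core inverse of the real matrix `A`. -/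
def IsCoreInv {n : ℕ} (A C : Matrix (Fin n) (Fin n) ℝ) : Prop :=
  A * C * A = A ∧ A * (C * C) = C ∧ (A * C)ᵀ = A * C

/-- `G` is a dual group generalized inverse (DGGI) of the dual matrix `M`. -/
def IsDGGI {n : ℕ} (M G : Matrix (Fin n) (Fin n) (DualNumber ℝ)) : Prop :=
  M * G * M = M ∧ G * M * G = G ∧ M * G = G * M

/-- `X` is a dual Moore–Penrose generalized inverse (DMPGI) of the dual matrix `M`. -/
def IsDMPGI {n : ℕ} (M X : Matrix (Fin n) (Fin n) (DualNumber ℝ)) : Prop :=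
  M * X * M = M ∧ X * M * X = X ∧ (M * X)ᵀ = M * X ∧ (X * M)ᵀ = X * M

/-- `G` is a dual core generalized inverse (DCGI) of the dual matrix `M`. -/
def IsDCGI {n : ℕ} (M G : Matrix (Fin n) (Fin n) (DualNumber ℝ)) : Prop :=
  M * G * M = M ∧ M * (G * G) = G ∧ (M * G)ᵀ = M * G

open scoped RightActions

open TrivSqZeroExt (inl inr)

/-- `g` is a group inverse of `a`: the notion behind both `IsGroupInv` (real matrices) and `IsDGGI`
(dual matrices), stated for an arbitrary multiplication so that it can be transported along
homomorphisms. -/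
structure IsGroupInverse {S : Type*} [Mul S] (a g : S) : Prop where
  mul_inv_mul : a * g * a = a
  inv_mul_inv : g * a * g = g
  commute : Commute a g

namespace IsGroupInverse

theorem map {S T F : Type*} [Mul S] [Mul T] [FunLike F S T] [MulHomClass F S T] (f : F) {a g : S}
    (h : IsGroupInverse a g) : IsGroupInverse (f a) (f g) where
  mul_inv_mul := by rw [← map_mul, ← map_mul, h.mul_inv_mul]
  inv_mul_inv := by rw [← map_mul, ← map_mul, h.inv_mul_inv]
  commute := h.commute.map f

section Semigroup

variable {S : Type*} [Semigroup S] {a g h : S}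

theorem mul_mul_inv (hg : IsGroupInverse a g) : a * (a * g) = a := by
  rw [hg.commute.eq, ← mul_assoc, hg.mul_inv_mul]

theorem mul_inv_inv (hg : IsGroupInverse a g) : a * g * g = g := by
  rw [hg.commute.eq, hg.inv_mul_inv]

theorem isIdempotentElem_mul (hg : IsGroupInverse a g) : IsIdempotentElem (a * g) := by
  rw [IsIdempotentElem, ← mul_assoc, hg.mul_inv_mul]

theorem mul_eq_mul (hg : IsGroupInverse a g) (hh : IsGroupInverse a h) : a * g = a * h :=
  calc
    a * g = a * h * a * g := by rw [hh.mul_inv_mul]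
    _ = h * (a * (a * g)) := by rw [hh.commute.eq, mul_assoc, mul_assoc]
    _ = a * h := by rw [hg.mul_mul_inv, hh.commute.eq]

theorem unique (hg : IsGroupInverse a g) (hh : IsGroupInverse a h) : g = h :=
  calc
    g = g * (a * g) := by rw [← mul_assoc, hg.inv_mul_inv]
    _ = g * (a * h) := by rw [hg.mul_eq_mul hh]
    _ = a * g * h := by rw [← mul_assoc, hg.commute.eq]
    _ = h := by rw [hg.mul_eq_mul hh, hh.mul_inv_inv]

end Semigroup

section Ring

variable {S : Type*} [Ring S] {a b g : S}

theorem add_mul_sub (hb : b * g * b = 0) :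
    (a + b) * (g - g * b * g) = a * g + (1 - a * g) * b * g :=
  calc
    (a + b) * (g - g * b * g) = a * g + (1 - a * g) * b * g - b * g * b * g := by noncomm_ring
    _ = a * g + (1 - a * g) * b * g := by rw [hb, zero_mul, sub_zero]

theorem sub_mul_add (hg : IsGroupInverse a g) (hb : b * g * b = 0) :
    (g - g * b * g) * (a + b) = a * g + g * b * (1 - a * g) :=
  calc
    (g - g * b * g) * (a + b) = g * a + g * b * (1 - g * a) - g * (b * g * b) := by noncomm_ring
    _ = a * g + g * b * (1 - a * g) := by rw [hb, mul_zero, sub_zero, hg.commute.eq]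

theorem mul_mul_one_sub_eq_zero_of_commute (hg : IsGroupInverse a g) (hb : b * g * b = 0)
    (h : Commute (a + b) (g - g * b * g)) : g * b * (1 - a * g) = 0 := by
  have herr : (1 - a * g) * b * g = g * b * (1 - a * g) := by
    simpa only [add_mul_sub hb, hg.sub_mul_add hb, add_right_inj] using h.eq
  calc
    g * b * (1 - a * g) = a * g * (g * b * (1 - a * g)) := by
      rw [← mul_assoc, ← mul_assoc, hg.mul_inv_inv]
    _ = a * g * (1 - a * g) * b * g := by rw [← herr]; simp only [mul_assoc]
    _ = 0 := by rw [hg.isIdempotentElem_mul.mul_one_sub_self, zero_mul, zero_mul]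

theorem mul_one_sub_eq_zero_of_add (hg : IsGroupInverse a g) (hb : b * g * b = 0)
    (h : IsGroupInverse (a + b) (g - g * b * g)) :
    b * (1 - a * g) = 0 ∧ (1 - a * g) * b = 0 := by
  have hga : (g - g * b * g) * (a + b) = a * g := by
    rw [hg.sub_mul_add hb, hg.mul_mul_one_sub_eq_zero_of_commute hb h.commute, add_zero]
  have hag : (a + b) * (g - g * b * g) = a * g := h.commute.eq.trans hga
  have hr : (a + b) * (a * g) = a + b := by rw [← hga, ← mul_assoc, h.mul_inv_mul]
  have hl : a * g * (a + b) = a + b := by rw [← hag, h.mul_inv_mul]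
  rw [add_mul, hg.mul_mul_inv, add_right_inj] at hr
  rw [mul_add, hg.mul_inv_mul, add_right_inj] at hl
  exact ⟨by rw [mul_one_sub, hr, sub_self], by rw [one_sub_mul, hl, sub_self]⟩

theorem add_of_mul_one_sub_eq_zero (hg : IsGroupInverse a g) (hb : b * g * b = 0)
    (hr : b * (1 - a * g) = 0) (hl : (1 - a * g) * b = 0) :
    IsGroupInverse (a + b) (g - g * b * g) := by
  have hag : (a + b) * (g - g * b * g) = a * g := by
    rw [add_mul_sub hb, hl, zero_mul, add_zero]
  have hga : (g - g * b * g) * (a + b) = a * g := by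
    rw [hg.sub_mul_add hb, mul_assoc, hr, mul_zero, add_zero]
  refine ⟨?_, ?_, hag.trans hga.symm⟩
  · rw [one_sub_mul, sub_eq_zero] at hl
    rw [hag, mul_add, hg.mul_inv_mul, ← hl]
  · rw [hga, mul_sub, ← mul_assoc, ← mul_assoc, hg.mul_inv_inv]

theorem eq_sub_iff {x : S} (hx : IsGroupInverse (a + b) x) (hg : IsGroupInverse a g)
    (hb : b * g * b = 0) : x = g - g * b * g ↔ b * (1 - a * g) = 0 ∧ (1 - a * g) * b = 0 :=
  ⟨fun h ↦ hg.mul_one_sub_eq_zero_of_add hb (h ▸ hx),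
    fun ⟨hr, hl⟩ ↦ hx.unique (hg.add_of_mul_one_sub_eq_zero hb hr hl)⟩

end Ring

end IsGroupInverse

theorem IsGroupInv.isGroupInverse {n : ℕ} {A G : Matrix (Fin n) (Fin n) ℝ} (h : IsGroupInv A G) :
    IsGroupInverse A G :=
  ⟨h.1, h.2.1, h.2.2⟩

theorem IsDGGI.isGroupInverse {n : ℕ} {M G : Matrix (Fin n) (Fin n) (DualNumber ℝ)}
    (h : IsDGGI M G) : IsGroupInverse M G :=
  ⟨h.1, h.2.1, h.2.2⟩

theorem dualNumberEquiv_dm {n : ℕ} (A B : Matrix (Fin n) (Fin n) ℝ) :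
    dualNumberEquiv (dm A B) = inl A + inr B := by
  ext <;> simp [dm]

theorem stmt17_general {R M : Type*} [Ring R] [AddCommGroup M] [Module R M] [Module Rᵐᵒᵖ M]
    [SMulCommClass R Rᵐᵒᵖ M] {a g : R} {b : M} {x : TrivSqZeroExt R M}
    (hx : IsGroupInverse (inl a + inr b) x) (hg : IsGroupInverse a g) :
    x = inl g + inr (-(g •> b <• g)) ↔ b <• (1 - a * g) = 0 ∧ (1 - a * g) •> b = 0 := by
  have hb : (inr b * inl g * inr b : TrivSqZeroExt R M) = 0 := by
    rw [TrivSqZeroExt.inr_mul_inl, TrivSqZeroExt.inr_mul_inr]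
  have inr_eq_zero (m : M) : (inr m : TrivSqZeroExt R M) = 0 ↔ m = 0 :=
    TrivSqZeroExt.inr_injective.eq_iff' (TrivSqZeroExt.inr_zero R)
  have h := hx.eq_sub_iff (hg.map (TrivSqZeroExt.inlHom R M)) hb
  simp only [TrivSqZeroExt.inlHom_apply, TrivSqZeroExt.inl_mul_inl, ← TrivSqZeroExt.inl_one,
    ← TrivSqZeroExt.inl_sub, TrivSqZeroExt.inl_mul_inr, TrivSqZeroExt.inr_mul_inl,
    inr_eq_zero] at h
  rwa [TrivSqZeroExt.inr_neg, ← sub_eq_add_neg]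

theorem stmt17 {n : ℕ} (A B G : Matrix (Fin n) (Fin n) ℝ)
    (Ghat : Matrix (Fin n) (Fin n) (DualNumber ℝ))
    (hGhat : IsDGGI (dm A B) Ghat) (hG : IsGroupInv A G) :
    Ghat = dm G (-(G * B * G)) ↔
      B * (1 - A * G) = 0 ∧ (1 - A * G) * B = 0 := by
  rw [← dualNumberEquiv.injective.eq_iff, dualNumberEquiv_dm]
  exact stmt17_general (dualNumberEquiv_dm A B ▸ hGhat.isGroupInverse.map dualNumberEquiv)
    hG.isGroupInverse
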